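/- Let (Γ, w) = (G, w, ℓ) and (Γ', w') = (G', w', ℓ') be loopless vertex-weighted metric graphs and let φ: (Γ, w) → (Γ', w') be a pseudo-harmonic morphism with loopless models (G, ℓ) and (G', ℓ'). Then the canonical divisors are related by K_{(Γ,w)} = φ*(K_{(Γ',w')}) + R_φ, where R_φ = Σ_{v ∈ V(G)} ( 2(M_φ(v) − 1 + w(v) − M_φ(v)·w'(φ(v))) − Σ_{e ∈ E_v(G)} (U_φ(e) − 1) )·(v). -/

import Mathlib

open scoped Classical

/-!
After expanding, the weights cancel and the identity at a vertex `v` says that the slopes of the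
edges at `v` sum to the multiplicity of `v` times the valence of its image. Group these edges by
their image: contracted edges have slope zero, and pseudo-harmonicity gives each edge at the image
of `v` a fibre of total slope equal to the multiplicity.
-/

theorem sum_eq_card_nsmul_of_sum_fiber_inl_eq {α β γ R : Type*} [AddCommMonoid R]
    {s : Finset α} {t : Finset β} {f : α → β ⊕ γ} {u : α → R} {m : R}
    (hmaps : ∀ a ∈ s, ∀ b, f a = Sum.inl b → b ∈ t)
    (hzero : ∀ a ∈ s, ∀ c, f a = Sum.inr c → u a = 0)
    (hfiber : ∀ b ∈ t, ∑ a ∈ s with f a = Sum.inl b, u a = m) :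
    ∑ a ∈ s, u a = t.card • m := by
  have hsupport : ∀ a ∈ s, u a ≠ 0 → f a ∈ t.map .inl := by
    intro a ha hne
    rcases hfa : f a with b | c
    · exact Finset.mem_map_of_mem _ (hmaps a ha b hfa)
    · exact absurd (hzero a ha c hfa) hne
  calc ∑ a ∈ s, u a
      = ∑ a ∈ s with f a ∈ t.map .inl, u a := (Finset.sum_filter_of_ne hsupport).symm
    _ = ∑ x ∈ t.map .inl, ∑ a ∈ s with f a = x, u a :=
        (Finset.sum_fiberwise_eq_sum_filter ..).symm
    _ = ∑ b ∈ t, ∑ a ∈ s with f a = Sum.inl b, u a := Finset.sum_map ..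
    _ = t.card • m := Finset.sum_eq_card_nsmul hfiber

section LocallyFinite

variable {V E V' E' R : Type*}

/-- The set `E_v(G)` of edges incident to `v`, where `ends` sends an edge of the multigraph `G` to
its pair of end points. Finiteness is asked for at `v` only, so that `G` may be infinite. -/
noncomputable def edgesAt (ends : E → Sym2 V) (v : V) [Finite {e // v ∈ ends e}] : Finset E :=
  Set.Finite.toFinset (s := {e | v ∈ ends e}) ‹Finite {e // v ∈ ends e}›

/-- The canonical divisor `K` of a vertex-weighted graph, as its function of coefficients.
A loop counts once in the valence, so this is the usual divisor only for loopless graphs; at a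
vertex with infinitely many edges the valence has the junk value `0`. -/
noncomputable def canonicalDivisor [Ring R] (ends : E → Sym2 V) (w : V → R) (v : V) : R :=
  Nat.card {e // v ∈ ends e} - 2 + 2 * w v

/-- The pullback `φ*(D')` of a divisor along a vertex map `φ` with multiplicities `M`. -/
def pullbackDivisor [Mul R] (φ : V → V') (M : V → R) (D' : V' → R) (v : V) : R :=
  M v * D' (φ v)

/-- The ramification divisor `R_φ` of a morphism with vertex map `φ`, slopes `U` and
multiplicities `M`. -/
noncomputable def ramificationDivisor [Ring R] (ends : E → Sym2 V)
    [∀ v, Finite {e // v ∈ ends e}] (w : V → R) (w' : V' → R) (φ : V → V') (U : E → R) (M : V → R)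
    (v : V) : R :=
  2 * (M v - 1 + w v - M v * w' (φ v)) - ∑ e ∈ edgesAt ends v, (U e - 1)

variable {ends : E → Sym2 V} {ends' : E' → Sym2 V'}

@[simp]
theorem mem_edgesAt {v : V} [Finite {e // v ∈ ends e}] {e : E} :
    e ∈ edgesAt ends v ↔ v ∈ ends e :=
  Set.Finite.mem_toFinset (s := {e | v ∈ ends e}) _

theorem card_edgesAt (v : V) [Finite {e // v ∈ ends e}] :
    (edgesAt ends v).card = Nat.card {e // v ∈ ends e} :=
  (Nat.subtype_card _ fun _ => mem_edgesAt).symm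

theorem edgesAt_eq_filter [Fintype E] (ends : E → Sym2 V) (v : V) :
    edgesAt ends v = Finset.univ.filter (fun e => v ∈ ends e) := by
  ext e
  simp only [mem_edgesAt, Finset.mem_filter_univ]

theorem sum_slope_edgesAt [AddCommMonoid R] {fV : V → V'} {fE : E → E' ⊕ V'} {U : E → R}
    {v : V} [Finite {e // v ∈ ends e}] [Finite {e' // fV v ∈ ends' e'}] {m : R}
    (hmor : ∀ e e', fE e = Sum.inl e' → ends' e' = (ends e).map fV)
    (hcontract : ∀ e v', fE e = Sum.inr v' → U e = 0)
    (hharm : ∀ e', fV v ∈ ends' e' → ∑ e ∈ edgesAt ends v with fE e = Sum.inl e', U e = m) :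
    ∑ e ∈ edgesAt ends v, U e = Nat.card {e' // fV v ∈ ends' e'} • m := by
  rw [← card_edgesAt]
  refine sum_eq_card_nsmul_of_sum_fiber_inl_eq ?_ (fun e _ => hcontract e)
    fun e' he' => hharm e' (mem_edgesAt.mp he')
  intro e he e' hfe
  rw [mem_edgesAt, hmor e e' hfe]
  exact Sym2.mem_map.mpr ⟨v, mem_edgesAt.mp he, rfl⟩

theorem riemann_hurwitz_divisor_vertex_weighted_metric_graphs_general [CommRing R]
    [∀ v, Finite {e // v ∈ ends e}] [∀ v', Finite {e' // v' ∈ ends' e'}]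
    (w : V → R) (w' : V' → R) (fV : V → V') (fE : E → E' ⊕ V') (U : E → R) (M : V → R)
    (hmor : ∀ e e', fE e = Sum.inl e' → ends' e' = (ends e).map fV)
    (hcontract : ∀ e v', fE e = Sum.inr v' → U e = 0)
    (hharm : ∀ v e', fV v ∈ ends' e' →
      ∑ e ∈ edgesAt ends v with fE e = Sum.inl e', U e = M v) :
    canonicalDivisor ends w =
      pullbackDivisor fV M (canonicalDivisor ends' w') +
        ramificationDivisor ends w w' fV U M := by
  funext v
  have hslope := sum_slope_edgesAt hmor hcontract (hharm v)
  simp only [Pi.add_apply, canonicalDivisor, pullbackDivisor, ramificationDivisor,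
    Finset.sum_sub_distrib, hslope, Finset.sum_const, card_edgesAt, nsmul_eq_mul]
  ring

end LocallyFinite

/-- **Riemann–Hurwitz for vertex-weighted metric graphs, divisor form.**
For a pseudo-harmonic morphism `φ : (Γ, w) → (Γ', w')` of loopless vertex-weighted
metric graphs with slopes `U` and multiplicities `M`:
`K_{(Γ,w)} = φ*(K_{(Γ',w')}) + R_φ`, where all divisors are supported on vertices,
`K_{(Γ,w)}(v) = val v − 2 + 2 w v`, `(φ* K')(v) = M v · K'(φ v)` and
`R_φ(v) = 2(M v − 1 + w v − M v · w'(φ v)) − Σ_{e ∈ E_v} (U e − 1)`. -/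
theorem riemann_hurwitz_divisor_vertex_weighted_metric_graphs
    (V E V' E' : Type) [Fintype V] [Fintype E] [Fintype V'] [Fintype E']
    (w : V → ℕ) (w' : V' → ℕ)
    (ends : E → Sym2 V) (ends' : E' → Sym2 V')
    (len : E → ℝ) (len' : E' → ℝ)
    (hlen : ∀ e, 0 < len e) (hlen' : ∀ e', 0 < len' e')
    (hloopless : ∀ e, ¬ (ends e).IsDiag)
    (hloopless' : ∀ e', ¬ (ends' e').IsDiag)
    (hconn : (SimpleGraph.fromRel (fun u v => ∃ e, ends e = s(u, v))).Connected)
    (hconn' : (SimpleGraph.fromRel (fun u v => ∃ e', ends' e' = s(u, v))).Connected)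
    (fV : V → V') (fE : E → E' ⊕ V')
    (hmorE : ∀ e e', fE e = Sum.inl e' → ends' e' = (ends e).map fV)
    (hmorV : ∀ e v', fE e = Sum.inr v' → (ends e).map fV = s(v', v'))
    (U : E → ℕ)
    (hU1 : ∀ e e', fE e = Sum.inl e' → (U e : ℝ) = len' e' / len e)
    (hU2 : ∀ e v', fE e = Sum.inr v' → U e = 0)
    (M : V → ℕ)
    (hharm : ∀ v e', fV v ∈ ends' e' →
      (∑ e ∈ Finset.univ.filter (fun e => v ∈ ends e ∧ fE e = Sum.inl e'), U e) = M v)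
    (d : ℕ)
    (hdeg : ∀ e', (∑ e ∈ Finset.univ.filter (fun e => fE e = Sum.inl e'), U e) = d)
    (hd0 : IsEmpty E' → d = 0)
    :
    (fun v : V => (Nat.card {e : E // v ∈ ends e} : ℤ) - 2 + 2 * (w v : ℤ)) =
      (fun v : V =>
        (M v : ℤ) * ((Nat.card {e' : E' // fV v ∈ ends' e'} : ℤ) - 2 + 2 * (w' (fV v) : ℤ))
          + (2 * ((M v : ℤ) - 1 + (w v : ℤ) - (M v : ℤ) * (w' (fV v) : ℤ))
            - ∑ e ∈ Finset.univ.filter (fun e => v ∈ ends e), ((U e : ℤ) - 1))) := by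
  have hRH := riemann_hurwitz_divisor_vertex_weighted_metric_graphs_general
    (ends := ends) (ends' := ends') (R := ℤ) (fun v => w v) (fun v' => w' v') fV fE
    (fun e => U e) (fun v => M v) hmorE (fun e v' he => by exact_mod_cast hU2 e v' he)
    (fun v e' he' => by
      rw [edgesAt_eq_filter, Finset.filter_filter]
      exact_mod_cast hharm v e' he')
  simpa only [funext_iff, Pi.add_apply, canonicalDivisor, pullbackDivisor, ramificationDivisor,
    edgesAt_eq_filter] using hRH
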